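/- Let L ∈ 𝓛, say L(A,B) = Σᵢ f(σᵢ) with f ∈ 𝓤. Then the matrix Γ̂_pos = Γ_pr − Σ_{i=1}^{r} (δᵢ²/(1+δᵢ²)) ŵᵢ ŵᵢᵀ belongs to 𝓜_r and minimizes the loss to the exact posterior covariance over 𝓜_r: for every Γ̃ ∈ 𝓜_r, L(Γ_pos, Γ̂_pos) ≤ L(Γ_pos, Γ̃). -/

import Mathlib

open Matrix MeasureTheory Polynomial Filter Finset

/-- `σ` enumerates (with multiplicity) the generalized eigenvalues of the pencil `(A, B)`,
i.e. the eigenvalues of `B⁻¹ * A`. -/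
def IsGenEigs {n : ℕ} (A B : Matrix (Fin n) (Fin n) ℝ) (σ : Fin n → ℝ) : Prop :=
  (B⁻¹ * A).charpoly = ∏ i : Fin n, (Polynomial.X - Polynomial.C (σ i))

/-- Membership in the class 𝓤: continuously differentiable `f : (0,∞) → ℝ` with
`f'(x)(1-x) < 0` for `x ≠ 1`, and `f(x) → ∞` as `x → ∞`. -/
def MemU (f : ℝ → ℝ) : Prop :=
  ∃ f' : ℝ → ℝ,
    (∀ x ∈ Set.Ioi (0:ℝ), HasDerivAt f (f' x) x) ∧
    ContinuousOn f' (Set.Ioi (0:ℝ)) ∧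
    (∀ x ∈ Set.Ioi (0:ℝ), x ≠ 1 → f' x * (1 - x) < 0) ∧
    Filter.Tendsto f Filter.atTop Filter.atTop

/-- The approximation class `𝓜_r`: positive definite matrices of the form
`Γpr - K Kᵀ` with `rank K ≤ r`. -/
def MClass {n : ℕ} (Γpr : Matrix (Fin n) (Fin n) ℝ) (r : ℕ) :
    Set (Matrix (Fin n) (Fin n) ℝ) :=
  {M | ∃ K : Matrix (Fin n) (Fin n) ℝ, K.rank ≤ r ∧ M = Γpr - K * Kᵀ ∧ M.PosDef}

/-!
Let `W` have columns `ŵᵢ`. Then `Γpr = W Wᵀ` and `Γpos = W diag(e) Wᵀ` with `eᵢ = (1 + δᵢ²)⁻¹`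
increasing in `i` and at most `1`. Generalized eigenvalues and the approximation class are invariant
under congruence, so one may assume `Γpr = 1` and `Γpos = diag(e)`. For `B = 1 - K Kᵀ` with
`rank K ≤ r`, the matrix `B⁻¹ - 1 = B⁻¹ K Kᵀ` has rank at most `r`, hence `√e B⁻¹ √e`, whose
eigenvalues are the generalized eigenvalues of `(diag(e), B)`, is a rank-`r` perturbation of
`diag(e)`. By Weyl's inequality its `i`-th smallest eigenvalue is at most `e_{i+r} ≤ 1`. Since `f`
decreases on `(0, 1]` and is minimal at `1`, the loss of `B` is at least `r f(1) + ∑_{j ≥ r} f(eⱼ)`,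
which is the loss of `diag(e₀, …, e_{r-1}, 1, …, 1)`, the whitened form of `Γ̂pos`.
-/

section Weyl

variable {𝕜 E : Type*} [RCLike 𝕜] [NormedAddCommGroup E] [InnerProductSpace 𝕜 E]

lemma exists_ne_zero_map_eq_zero_inner_eq_zero {F ι : Type*} [AddCommGroup F] [Module 𝕜 F]
    [FiniteDimensional 𝕜 E] [Fintype ι] (N : E →ₗ[𝕜] F) (v : ι → E)
    (h : Module.finrank 𝕜 N.range + Fintype.card ι < Module.finrank 𝕜 E) :
    ∃ x ≠ 0, N x = 0 ∧ ∀ i, inner 𝕜 (v i) x = 0 := by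
  let Φ : E →ₗ[𝕜] N.range × (ι → 𝕜) := N.rangeRestrict.prod (.pi fun i ↦ innerₛₗ 𝕜 (v i))
  have hΦ : LinearMap.ker Φ ≠ ⊥ := by
    apply LinearMap.ker_ne_bot_of_finrank_lt
    rwa [Module.finrank_prod, Module.finrank_fintype_fun_eq_card]
  obtain ⟨x, hx, hx0⟩ := Submodule.exists_mem_ne_zero_of_ne_bot hΦ
  obtain ⟨hN, hv⟩ := Prod.ext_iff.mp (LinearMap.mem_ker.mp hx)
  exact ⟨x, hx0, congrArg Subtype.val hN, congrFun hv⟩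

section Rayleigh

variable {ι : Type*} [Fintype ι] {b : OrthonormalBasis ι 𝕜 E} {T : E →ₗ[𝕜] E} {a : ι → ℝ}

lemma re_inner_map_self_eq_sum_of_eigenbasis (hT : ∀ i, T (b i) = (a i : 𝕜) • b i) (x : E) :
    RCLike.re (inner 𝕜 x (T x)) = ∑ i, a i * ‖inner 𝕜 (b i) x‖ ^ 2 := by
  have hTx : T x = ∑ i, (inner 𝕜 (b i) x * a i) • b i := by
    conv_lhs => rw [← b.sum_repr' x]
    simp only [map_sum, map_smul, hT, smul_smul]
  rw [hTx, inner_sum, map_sum]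
  refine Finset.sum_congr rfl fun i _ ↦ ?_
  rw [inner_smul_right, mul_right_comm, mul_comm, RCLike.re_ofReal_mul, inner_mul_symm_re_eq_norm,
    norm_mul, norm_inner_symm x, ← sq]

lemma mul_norm_sq_le_re_inner_map_self (hT : ∀ i, T (b i) = (a i : 𝕜) • b i) {c : ℝ} {x : E}
    (h : ∀ i, inner 𝕜 (b i) x ≠ 0 → c ≤ a i) :
    c * ‖x‖ ^ 2 ≤ RCLike.re (inner 𝕜 x (T x)) := by
  rw [re_inner_map_self_eq_sum_of_eigenbasis hT, ← b.sum_sq_norm_inner_right x, Finset.mul_sum]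
  refine Finset.sum_le_sum fun i _ ↦ ?_
  rcases eq_or_ne (inner 𝕜 (b i) x) 0 with hi | hi
  · simp [hi]
  · exact mul_le_mul_of_nonneg_right (h i hi) (sq_nonneg _)

lemma re_inner_map_self_le_mul_norm_sq (hT : ∀ i, T (b i) = (a i : 𝕜) • b i) {c : ℝ} {x : E}
    (h : ∀ i, inner 𝕜 (b i) x ≠ 0 → a i ≤ c) :
    RCLike.re (inner 𝕜 x (T x)) ≤ c * ‖x‖ ^ 2 := by
  rw [re_inner_map_self_eq_sum_of_eigenbasis hT, ← b.sum_sq_norm_inner_right x, Finset.mul_sum]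
  refine Finset.sum_le_sum fun i _ ↦ ?_
  rcases eq_or_ne (inner 𝕜 (b i) x) 0 with hi | hi
  · simp [hi]
  · exact mul_le_mul_of_nonneg_right (h i hi) (sq_nonneg _)

end Rayleigh

theorem eigenvalue_le_of_finrank_range_sub_le {n r : ℕ} {T S : E →ₗ[𝕜] E}
    {b c : OrthonormalBasis (Fin n) 𝕜 E} {s t : Fin n → ℝ}
    (hT : ∀ i, T (b i) = (t i : 𝕜) • b i) (ht : Monotone t)
    (hS : ∀ i, S (c i) = (s i : 𝕜) • c i) (hs : Monotone s)
    (hTS : Module.finrank 𝕜 (T - S).range ≤ r) {i j : Fin n} (hij : (i : ℕ) + r ≤ j) :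
    t i ≤ s j := by
  have : FiniteDimensional 𝕜 E := b.toBasis.finiteDimensional_of_finite
  -- The `r + i + (n - 1 - j) < n` linear conditions on `x` have a nonzero common solution.
  obtain ⟨x, hx0, hxTS, hx⟩ := exists_ne_zero_map_eq_zero_inner_eq_zero (T - S)
    (Sum.elim (fun k : Finset.Iio i ↦ b k) (fun k : Finset.Ioi j ↦ c k)) (by
      rw [Fintype.card_sum, Fintype.card_coe, Fintype.card_coe, Fin.card_Iio, Fin.card_Ioi,
        Module.finrank_eq_card_basis b.toBasis, Fintype.card_fin]
      lia)
  have hb : ∀ k, inner 𝕜 (b k) x ≠ 0 → t i ≤ t k := fun k hk ↦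
    ht <| not_lt.mp fun hki ↦ hk <| hx (.inl ⟨k, Finset.mem_Iio.mpr hki⟩)
  have hc : ∀ k, inner 𝕜 (c k) x ≠ 0 → s k ≤ s j := fun k hk ↦
    hs <| not_lt.mp fun hjk ↦ hk <| hx (.inr ⟨k, Finset.mem_Ioi.mpr hjk⟩)
  refine le_of_mul_le_mul_right ?_ (pow_pos (norm_pos_iff.mpr hx0) 2)
  calc t i * ‖x‖ ^ 2 ≤ RCLike.re (inner 𝕜 x (T x)) := mul_norm_sq_le_re_inner_map_self hT hb
    _ = RCLike.re (inner 𝕜 x (S x)) := by rw [sub_eq_zero.mp hxTS]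
    _ ≤ s j * ‖x‖ ^ 2 := re_inner_map_self_le_mul_norm_sq hS hc

theorem eigenvalues_sort_le_of_rank_sub_diagonal_le {n r : ℕ} {A : Matrix (Fin n) (Fin n) 𝕜}
    (hA : A.IsHermitian) {d : Fin n → ℝ} (hd : Monotone d)
    (hAd : (A - diagonal fun i ↦ (d i : 𝕜)).rank ≤ r) {i j : Fin n} (hij : (i : ℕ) + r ≤ j) :
    hA.eigenvalues (Tuple.sort hA.eigenvalues i) ≤ d j := by
  refine eigenvalue_le_of_finrank_range_sub_le (T := toEuclideanLin A)
    (S := toEuclideanLin (diagonal fun i ↦ (d i : 𝕜)))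
    (b := hA.eigenvectorBasis.reindex (Tuple.sort hA.eigenvalues).symm)
    (c := EuclideanSpace.basisFun (Fin n) 𝕜) (t := hA.eigenvalues ∘ Tuple.sort hA.eigenvalues)
    (fun k ↦ ?_) (Tuple.monotone_sort _) (fun k ↦ ?_) hd ?_ hij
  · ext l
    simpa [RCLike.real_smul_eq_coe_mul] using congrFun (hA.mulVec_eigenvectorBasis _) l
  · ext l
    rcases eq_or_ne l k with rfl | hl
    · simp [RCLike.real_smul_eq_coe_mul]
    · simp [hl]
  · rwa [← map_sub, toEuclideanLin_eq_toLin_orthonormal, ← rank_eq_finrank_range_toLin]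

end Weyl

namespace IsGenEigs

variable {n : ℕ} {A B W : Matrix (Fin n) (Fin n) ℝ} {σ τ : Fin n → ℝ}

lemma sum_comp_eq {M : Type*} [AddCommMonoid M] (hσ : IsGenEigs A B σ) (hτ : IsGenEigs A B τ)
    (f : ℝ → M) : ∑ i, f (σ i) = ∑ i, f (τ i) := by
  have roots_eq (ρ : Fin n → ℝ) : (∏ i, (X - C (ρ i))).roots = Finset.univ.val.map ρ := by
    simpa only [Multiset.map_map] using! roots_multiset_prod_X_sub_C (Finset.univ.val.map ρ)
  have hστ : Finset.univ.val.map σ = Finset.univ.val.map τ := by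
    rw [← roots_eq, ← roots_eq, ← hσ, ← hτ]
  simpa only [Multiset.map_map] using! congrArg (fun s ↦ (s.map f).sum) hστ

lemma mul_mul_transpose_iff (hW : IsUnit W) :
    IsGenEigs (W * A * Wᵀ) (W * B * Wᵀ) σ ↔ IsGenEigs A B σ := by
  have hdet : IsUnit W.det := (Matrix.isUnit_iff_isUnit_det W).mp hW
  have hpencil : (W * B * Wᵀ)⁻¹ * (W * A * Wᵀ) = Wᵀ⁻¹ * (B⁻¹ * A * Wᵀ) := by
    simp only [Matrix.mul_inv_rev, Matrix.mul_assoc, Matrix.nonsing_inv_mul_cancel_left W _ hdet]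
  rw [IsGenEigs, hpencil, Matrix.charpoly_mul_comm,
    Matrix.mul_nonsing_inv_cancel_right _ _ (by rwa [Matrix.det_transpose]), IsGenEigs]

lemma diagonal_diagonal {a c : Fin n → ℝ} (hc : ∀ i, c i ≠ 0) :
    IsGenEigs (diagonal a) (diagonal c) (fun i ↦ a i / c i) := by
  have hinv : (diagonal c)⁻¹ = diagonal fun i ↦ (c i)⁻¹ :=
    Matrix.inv_eq_right_inv <| by simp [hc]
  rw [IsGenEigs, hinv, Matrix.diagonal_mul_diagonal, Matrix.charpoly_diagonal]
  simp only [div_eq_inv_mul]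

end IsGenEigs

namespace MClass

variable {n r : ℕ} {Γ M : Matrix (Fin n) (Fin n) ℝ}

lemma mul_mul_transpose_mem (hM : M ∈ MClass Γ r) {W : Matrix (Fin n) (Fin n) ℝ}
    (hW : IsUnit W) : W * M * Wᵀ ∈ MClass (W * Γ * Wᵀ) r := by
  obtain ⟨K, hK, rfl, hpos⟩ := hM
  refine ⟨W * K, (Matrix.rank_mul_le_right _ _).trans hK, ?_, ?_⟩
  · simp only [Matrix.transpose_mul, Matrix.mul_sub, Matrix.sub_mul, Matrix.mul_assoc]
  · simpa only [Matrix.star_eq_conjTranspose, conjTranspose_eq_transpose_of_trivial] using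
      hW.posDef_star_right_conjugate_iff.mpr hpos

lemma diagonal_mem_one {c : Fin n → ℝ} (hc0 : ∀ i, 0 < c i) (hc1 : ∀ i, c i ≤ 1)
    (hcr : #{i | c i ≠ 1} ≤ r) : diagonal c ∈ MClass 1 r := by
  refine ⟨diagonal fun i ↦ √(1 - c i), ?_, ?_, .diagonal hc0⟩
  · rw [Matrix.rank_diagonal, Fintype.card_subtype]
    refine (Finset.card_le_card <| Finset.monotone_filter_right _ fun i _ hi hci ↦ hi ?_).trans hcr
    rw [hci, sub_self, Real.sqrt_zero]
  · simp only [diagonal_transpose, diagonal_mul_diagonal, ← diagonal_one, diagonal_sub,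
      Real.mul_self_sqrt (sub_nonneg.mpr (hc1 _)), sub_sub_cancel]

lemma rank_inv_sub_one_le (hM : M ∈ MClass 1 r) : (M⁻¹ - 1).rank ≤ r := by
  obtain ⟨K, hK, hMK, hpos⟩ := hM
  have hinv : M⁻¹ - 1 = M⁻¹ * K * Kᵀ := by
    have hKK : K * Kᵀ = 1 - M := by rw [hMK, sub_sub_cancel]
    rw [Matrix.mul_assoc, hKK, Matrix.mul_sub, Matrix.mul_one,
      Matrix.nonsing_inv_mul _ ((Matrix.isUnit_iff_isUnit_det M).mp hpos.isUnit)]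
  rw [hinv]
  exact ((Matrix.rank_mul_le_left _ _).trans (Matrix.rank_mul_le_right _ _)).trans hK

end MClass

namespace MemU

variable {f : ℝ → ℝ}

lemma antitoneOn (hf : MemU f) : AntitoneOn f (Set.Ioc 0 1) := by
  obtain ⟨f', hderiv, -, hsign, -⟩ := hf
  refine antitoneOn_of_deriv_nonpos (convex_Ioc 0 1)
    (fun x hx ↦ (hderiv x hx.1).continuousAt.continuousWithinAt) ?_ ?_ <;> rw [interior_Ioc]
  · exact fun x hx ↦ (hderiv x hx.1).differentiableAt.differentiableWithinAt
  · intro x hx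
    rw [(hderiv x hx.1).deriv]
    exact (neg_of_mul_neg_left (hsign x hx.1 hx.2.ne) (sub_pos.mpr hx.2).le).le

lemma isMinOn (hf : MemU f) : IsMinOn f (Set.Ioi 0) 1 := by
  obtain ⟨f', hderiv, -, hsign, -⟩ := hf
  have pos_of_one_lt {x : ℝ} (hx : 1 < x) : x ∈ Set.Ioi 0 := one_pos.trans hx
  refine isMinOn_Ioi_of_deriv (hderiv 1 (Set.mem_Ioi.mpr one_pos)).continuousAt
    (fun x hx ↦ (hderiv x hx.1).differentiableAt.differentiableWithinAt)
    (fun x hx ↦ (hderiv x (pos_of_one_lt hx)).differentiableAt.differentiableWithinAt)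
    (fun x hx ↦ ?_) (fun x hx ↦ ?_)
  · rw [(hderiv x hx.1).deriv]
    exact (neg_of_mul_neg_left (hsign x hx.1 hx.2.ne) (sub_pos.mpr hx.2).le).le
  · rw [(hderiv x (pos_of_one_lt hx)).deriv]
    exact (pos_of_mul_neg_left (hsign x (pos_of_one_lt hx) hx.ne') (sub_neg.mpr hx).le).le

end MemU

section Whitened

variable {M : Type*} [AddCommMonoid M] [PartialOrder M] [IsOrderedAddMonoid M] {n r : ℕ}

lemma sum_ite_lt_le_sum_of_shift {a b : Fin n → M} {c : M} (hc : ∀ i, c ≤ b i)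
    (hab : ∀ i j : Fin n, (i : ℕ) + r ≤ j → a j ≤ b i) :
    ∑ j : Fin n, (if (j : ℕ) < r then c else a j) ≤ ∑ i, b i := by
  cases n with
  | zero => simp
  | succ n =>
    -- Match `j` with `j - r` modulo `n + 1`; the indices `j < r` wrap around.
    rw [← Equiv.sum_comp (Equiv.subRight (Fin.ofNat (n + 1) r)) b]
    refine Finset.sum_le_sum fun j _ ↦ ?_
    split_ifs with hj
    · exact hc _
    · refine hab _ j ?_
      have hr : (Fin.ofNat (n + 1) r : ℕ) = r := Nat.mod_eq_of_lt (by lia)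
      rw [Equiv.subRight_apply, Fin.sub_val_of_le (by rw [Fin.le_def]; lia)]
      lia

theorem sum_ite_lt_le_sum_of_mem_mClass_one {e : Fin n → ℝ} (he : Monotone e)
    (he0 : ∀ i, 0 < e i) (he1 : ∀ i, e i ≤ 1) {f : ℝ → M} (hf : AntitoneOn f (Set.Ioc 0 1))
    (hf1 : IsMinOn f (Set.Ioi 0) 1) {B : Matrix (Fin n) (Fin n) ℝ} (hB : B ∈ MClass 1 r)
    {σ : Fin n → ℝ} (hσ : IsGenEigs (diagonal e) B σ) :
    ∑ i : Fin n, f (if (i : ℕ) < r then 1 else e i) ≤ ∑ i, f (σ i) := by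
  let E : Matrix (Fin n) (Fin n) ℝ := diagonal fun i ↦ √(e i)
  have hEE : E * E = diagonal e := by
    simp only [E, diagonal_mul_diagonal, Real.mul_self_sqrt (he0 _).le]
  have hE : IsUnit E := by
    rw [Matrix.isUnit_diagonal, Pi.isUnit_iff]
    exact fun i ↦ (Real.sqrt_pos.mpr (he0 i)).ne'.isUnit
  have hA : (E * B⁻¹ * E).PosDef := by
    obtain ⟨-, -, -, hpos⟩ := hB
    simpa [E, Matrix.star_eq_conjTranspose] using hE.posDef_star_right_conjugate_iff.mpr hpos.inv
  have hrank : (E * B⁻¹ * E - diagonal e).rank ≤ r := by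
    have : E * B⁻¹ * E - diagonal e = E * (B⁻¹ - 1) * E := by
      rw [Matrix.mul_sub, Matrix.sub_mul, Matrix.mul_one, hEE]
    rw [this]
    exact ((Matrix.rank_mul_le_left _ _).trans (Matrix.rank_mul_le_right _ _)).trans
      (MClass.rank_inv_sub_one_le hB)
  let τ : Fin n → ℝ := hA.isHermitian.eigenvalues
  have hτ : IsGenEigs (diagonal e) B τ := by
    rw [IsGenEigs, ← hEE, ← Matrix.mul_assoc, Matrix.charpoly_mul_comm, ← Matrix.mul_assoc]
    exact hA.isHermitian.charpoly_eq
  rw [hσ.sum_comp_eq hτ, ← Equiv.sum_comp (Tuple.sort τ) fun i ↦ f (τ i)]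
  simp only [apply_ite f]
  refine sum_ite_lt_le_sum_of_shift (fun i ↦ hf1 (hA.eigenvalues_pos _)) fun i j hij ↦ ?_
  have hle : τ (Tuple.sort τ i) ≤ e j :=
    eigenvalues_sort_le_of_rank_sub_diagonal_le hA.isHermitian he hrank hij
  exact hf ⟨hA.eigenvalues_pos _, hle.trans (he1 j)⟩ ⟨he0 j, he1 j⟩ hle

end Whitened

section Whitening

lemma sum_smul_vecMulVec_eq_transpose_mul_diagonal_mul {m n R : Type*} [Fintype m] [DecidableEq m]
    [CommSemiring R] (a : m → R) (U : Matrix m n R) :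
    ∑ i, a i • vecMulVec (U i) (U i) = Uᵀ * diagonal a * U := by
  ext j k
  rw [Matrix.sum_apply, Matrix.mul_apply]
  refine Finset.sum_congr rfl fun i _ ↦ ?_
  rw [Matrix.mul_diagonal, Matrix.smul_apply, vecMulVec_apply, Matrix.transpose_apply, smul_eq_mul]
  ring

lemma transpose_mul_self_sub_sum_filter {m n K : Type*} [Fintype m] [DecidableEq m] [Field K]
    (U : Matrix m n K) {d : m → K} (hd : ∀ i, 1 + d i ≠ 0) (p : m → Prop) [DecidablePred p] :
    Uᵀ * U - ∑ i with p i, (d i / (1 + d i)) • vecMulVec (U i) (U i) =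
      Uᵀ * diagonal (fun i ↦ if p i then (1 + d i)⁻¹ else 1) * U := by
  have hdiag : diagonal (fun i ↦ if p i then (1 + d i)⁻¹ else 1) =
      1 - diagonal fun i ↦ if p i then d i / (1 + d i) else 0 := by
    rw [← diagonal_one, diagonal_sub]
    congr! 2 with i
    split_ifs
    · rw [eq_sub_iff_add_eq, inv_eq_one_div, ← add_div, div_self (hd i)]
    · rw [sub_zero]
  rw [hdiag, Matrix.mul_sub, Matrix.sub_mul, Matrix.mul_one,
    ← sum_smul_vecMulVec_eq_transpose_mul_diagonal_mul, Finset.sum_filter]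
  simp only [ite_smul, zero_smul]

variable {ι R : Type*} [Fintype ι] [DecidableEq ι]

lemma eq_mul_transpose_of_transpose_mul_inv_mul [CommRing R] {W Γ : Matrix ι ι R}
    (hW : Wᵀ * Γ⁻¹ * W = 1) : Γ = W * Wᵀ := by
  have hright : Γ⁻¹ * (W * Wᵀ) = 1 := by
    rw [_root_.mul_eq_one_comm, Matrix.mul_assoc, _root_.mul_eq_one_comm, hW]
  have hΓ : IsUnit Γ := Matrix.isUnit_nonsing_inv_iff.mp (.of_mul_eq_one _ hright)
  rw [← Matrix.inv_eq_right_inv hright,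
    Matrix.nonsing_inv_nonsing_inv Γ ((Matrix.isUnit_iff_isUnit_det Γ).mp hΓ)]

lemma add_inv_inv_eq_of_mul_eq [Field R] {W Γ H : Matrix ι ι R} {d : ι → R}
    (hW : Wᵀ * Γ⁻¹ * W = 1) (hH : H * W = Γ⁻¹ * W * diagonal d) (hd : ∀ i, 1 + d i ≠ 0) :
    (H + Γ⁻¹)⁻¹ = W * diagonal (fun i ↦ (1 + d i)⁻¹) * Wᵀ := by
  have hsum : (H + Γ⁻¹) * W = Γ⁻¹ * W * diagonal fun i ↦ 1 + d i := by
    rw [← diagonal_add, diagonal_one, Matrix.mul_add, Matrix.mul_one, Matrix.add_mul, hH, add_comm]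
  have hdiag : diagonal (fun i ↦ 1 + d i) * diagonal (fun i ↦ (1 + d i)⁻¹) = 1 := by
    simp [diagonal_mul_diagonal, hd]
  apply Matrix.inv_eq_right_inv
  calc (H + Γ⁻¹) * (W * diagonal (fun i ↦ (1 + d i)⁻¹) * Wᵀ)
      = Γ⁻¹ * W * (diagonal (fun i ↦ 1 + d i) * diagonal fun i ↦ (1 + d i)⁻¹) * Wᵀ := by
        simp only [← Matrix.mul_assoc, hsum]
    _ = Γ⁻¹ * W * Wᵀ := by rw [hdiag, Matrix.mul_one]
    _ = 1 := by rw [_root_.mul_eq_one_comm, ← Matrix.mul_assoc, hW]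

end Whitening

/-- `B` minimizes the loss `B' ↦ ∑ i, f (σ i)` over `B' ∈ MClass Γ r`, where `σ` are the generalized
eigenvalues of `(A, B')`. The loss is a relation rather than a function of `B'`, since `IsGenEigs`
determines `σ` only up to permutation. -/
def IsOptimalApprox {M : Type*} [AddCommMonoid M] [LE M] {n : ℕ} (f : ℝ → M)
    (A Γ : Matrix (Fin n) (Fin n) ℝ) (r : ℕ) (B : Matrix (Fin n) (Fin n) ℝ) : Prop :=
  B ∈ MClass Γ r ∧ ∀ B' ∈ MClass Γ r, ∀ σ σ' : Fin n → ℝ,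
    IsGenEigs A B σ → IsGenEigs A B' σ' → ∑ i, f (σ i) ≤ ∑ i, f (σ' i)

lemma IsOptimalApprox.mul_mul_transpose {M : Type*} [AddCommMonoid M] [LE M] {n r : ℕ} {f : ℝ → M}
    {A Γ B W : Matrix (Fin n) (Fin n) ℝ} (h : IsOptimalApprox f A Γ r B) (hW : IsUnit W) :
    IsOptimalApprox f (W * A * Wᵀ) (W * Γ * Wᵀ) r (W * B * Wᵀ) := by
  have hWinv : IsUnit W⁻¹ := Matrix.isUnit_nonsing_inv_iff.mpr hW
  have hdet : IsUnit W.det := (Matrix.isUnit_iff_isUnit_det W).mp hW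
  have hcancel (X : Matrix (Fin n) (Fin n) ℝ) : W⁻¹ * (W * X * Wᵀ) * W⁻¹ᵀ = X := by
    rw [Matrix.mul_assoc W, Matrix.nonsing_inv_mul_cancel_left _ _ hdet, Matrix.mul_assoc,
      ← transpose_mul, Matrix.nonsing_inv_mul _ hdet, transpose_one, Matrix.mul_one]
  refine ⟨MClass.mul_mul_transpose_mem h.1 hW, fun B' hB' σ σ' hσ hσ' ↦
    h.2 (W⁻¹ * B' * W⁻¹ᵀ) ?_ σ σ' ((IsGenEigs.mul_mul_transpose_iff hW).mp hσ) ?_⟩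
  · simpa only [hcancel] using MClass.mul_mul_transpose_mem hB' hWinv
  · simpa only [hcancel] using (IsGenEigs.mul_mul_transpose_iff hWinv).mpr hσ'

section Optimality

variable {M : Type*} [AddCommMonoid M] [PartialOrder M] [IsOrderedAddMonoid M] {n r : ℕ}

theorem isOptimalApprox_diagonal {e : Fin n → ℝ} (he : Monotone e) (he0 : ∀ i, 0 < e i)
    (he1 : ∀ i, e i ≤ 1) {f : ℝ → M} (hf : AntitoneOn f (Set.Ioc 0 1))
    (hf1 : IsMinOn f (Set.Ioi 0) 1) :
    IsOptimalApprox f (diagonal e) 1 r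
      (diagonal fun i : Fin n ↦ if (i : ℕ) < r then e i else 1) := by
  have hc0 (i : Fin n) : 0 < if (i : ℕ) < r then e i else 1 := by
    split_ifs; exacts [he0 i, one_pos]
  refine ⟨MClass.diagonal_mem_one hc0 (fun i ↦ ?_) ?_, fun B hB σ σ' hσ hσ' ↦ ?_⟩
  · split_ifs; exacts [he1 i, le_rfl]
  · calc #{i : Fin n | (if (i : ℕ) < r then e i else 1) ≠ 1} ≤ #{i : Fin n | (i : ℕ) < r} :=
          Finset.card_le_card <| Finset.monotone_filter_right _ fun i _ ↦ by grind
      _ ≤ r := by rw [Fin.card_filter_val_lt]; exact min_le_right n r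
  · have hdiv (i : Fin n) : e i / (if (i : ℕ) < r then e i else 1) =
        if (i : ℕ) < r then 1 else e i := by
      split_ifs; exacts [div_self (he0 i).ne', div_one _]
    rw [hσ.sum_comp_eq (IsGenEigs.diagonal_diagonal fun i ↦ (hc0 i).ne')]
    simp only [hdiv]
    exact sum_ite_lt_le_sum_of_mem_mClass_one he he0 he1 hf hf1 hB hσ'

theorem optimal_posterior_covariance_approx_general
    {Γpr H : Matrix (Fin n) (Fin n) ℝ} {d : Fin n → ℝ} {w : Fin n → Fin n → ℝ}
    (hd : ∀ i, 0 ≤ d i) (hord : Antitone d)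
    (heig : ∀ i, H *ᵥ w i = d i • (Γpr⁻¹ *ᵥ w i))
    (hnorm : ∀ i j, w i ⬝ᵥ (Γpr⁻¹ *ᵥ w j) = if i = j then (1 : ℝ) else 0)
    {f : ℝ → M} (hf : AntitoneOn f (Set.Ioc 0 1)) (hf1 : IsMinOn f (Set.Ioi 0) 1) :
    IsOptimalApprox f (H + Γpr⁻¹)⁻¹ Γpr r
      (Γpr - ∑ i ∈ {i : Fin n | (i : ℕ) < r}, (d i / (1 + d i)) • vecMulVec (w i) (w i)) := by
  let W : Matrix (Fin n) (Fin n) ℝ := (Matrix.of w)ᵀ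
  have hd1 (i : Fin n) : 0 < 1 + d i := add_pos_of_pos_of_nonneg one_pos (hd i)
  have hW : Wᵀ * Γpr⁻¹ * W = 1 := by
    ext i j
    rw [Matrix.one_apply, ← hnorm, Matrix.mul_assoc]
    rfl
  have hHW : H * W = Γpr⁻¹ * W * diagonal d := by
    ext i j
    rw [Matrix.mul_diagonal, mul_comm]
    exact congrFun (heig j) i
  have hWunit : IsUnit W := .of_mul_eq_one_right _ hW
  have hpr : Γpr = W * Wᵀ := eq_mul_transpose_of_transpose_mul_inv_mul hW
  have hwhite := isOptimalApprox_diagonal (r := r) (e := fun i ↦ (1 + d i)⁻¹)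
    (fun i j hij ↦ inv_anti₀ (hd1 j) (by gcongr; exact hord hij)) (fun i ↦ inv_pos.mpr (hd1 i))
    (fun i ↦ inv_le_one_of_one_le₀ (le_add_of_nonneg_right (hd i))) hf hf1
  convert hwhite.mul_mul_transpose hWunit using 1
  · exact add_inv_inv_eq_of_mul_eq hW hHW fun i ↦ (hd1 i).ne'
  · rw [Matrix.mul_one, hpr]
  · rw [hpr]
    exact transpose_mul_self_sub_sum_filter (Matrix.of w) (fun i ↦ (hd1 i).ne') _

end Optimality

/-- Theorem 2.3 (i) of Spantini et al.: the matrix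
`Γ̂pos = Γpr − Σ_{i<r} (δᵢ²/(1+δᵢ²)) ŵᵢ ŵᵢᵀ` belongs to `𝓜_r` and minimizes
every loss `L ∈ 𝓛` to the exact posterior covariance over `𝓜_r`. -/
theorem optimal_posterior_covariance_approx
    (n m r : ℕ) (hn : 0 < n) (hm : 0 < m) (hr : r ≤ n)
    (G : Matrix (Fin m) (Fin n) ℝ)
    (Γobs : Matrix (Fin m) (Fin m) ℝ) (hobs : Γobs.PosDef)
    (Γpr : Matrix (Fin n) (Fin n) ℝ) (hpr : Γpr.PosDef)
    (H Γpos : Matrix (Fin n) (Fin n) ℝ)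
    (hH : H = Gᵀ * Γobs⁻¹ * G)
    (hΓpos : Γpos = (H + Γpr⁻¹)⁻¹)
    (δ : Fin n → ℝ) (w : Fin n → Fin n → ℝ)
    (hδ : ∀ i, 0 ≤ δ i)
    (hord : ∀ i j : Fin n, i ≤ j → (δ j) ^ 2 ≤ (δ i) ^ 2)
    (heig : ∀ i, H *ᵥ w i = (δ i) ^ 2 • (Γpr⁻¹ *ᵥ w i))
    (hnorm : ∀ i j, w i ⬝ᵥ (Γpr⁻¹ *ᵥ w j) = if i = j then (1:ℝ) else 0)
    (f : ℝ → ℝ) (hf : MemU f)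
    (Γhat : Matrix (Fin n) (Fin n) ℝ)
    (hΓhat : Γhat = Γpr - ∑ i ∈ Finset.univ.filter (fun i : Fin n => (i : ℕ) < r),
      ((δ i) ^ 2 / (1 + (δ i) ^ 2)) • vecMulVec (w i) (w i)) :
    Γhat ∈ MClass Γpr r ∧
      ∀ Γt ∈ MClass Γpr r, ∀ σ σ' : Fin n → ℝ,
        IsGenEigs Γpos Γhat σ → IsGenEigs Γpos Γt σ' →
        ∑ i, f (σ i) ≤ ∑ i, f (σ' i) := by
  subst hΓpos hΓhat
  exact optimal_posterior_covariance_approx_general (fun i ↦ sq_nonneg (δ i)) hord heig hnorm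
    hf.antitoneOn hf.isMinOn
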